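/- Let T be a locally simple complete CLO theory such that IT(T) is countably infinite and has infinitely many nonisolated members. Then T has exactly 2^{ℵ₀} countable models up to isomorphism. -/

import Mathlib

open FirstOrder Language Set

/-- Relation symbols of the language `L_κ` of colored linear orders:
a binary `<` and a unary color predicate for each `i : ι`. -/
inductive CLORel (ι : Type) : ℕ → Type
  | lt : CLORel ι 2
  | color (i : ι) : CLORel ι 1

/-- The language `L_κ`, where the colors are indexed by `ι`. -/
def CLOLang (ι : Type) : Language :=
  ⟨fun _ => Empty, CLORel ι⟩

/-- Interpretation of the relation symbols on a linear order `M` with colors `c`. -/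
def cloRelMap {ι M : Type} [LinearOrder M] (c : ι → Set M) :
    ∀ {n}, CLORel ι n → (Fin n → M) → Prop
  | _, .lt => fun v => v 0 < v 1
  | _, .color i => fun v => v 0 ∈ c i

/-- The canonical `L_κ`-structure (a colored linear order, CLO) on a linear
order `M` whose colors are given by `c : ι → Set M`. -/
def CLOStr (ι M : Type) [LinearOrder M] (c : ι → Set M) : (CLOLang ι).Structure M where
  funMap := fun f => Empty.elim f
  RelMap := cloRelMap c

/-- Satisfaction of an `L_κ`-formula in the CLO `(M, <, c)`. -/
def Sat {ι : Type} (M : Type) [LinearOrder M] (c : ι → Set M) {α : Type}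
    (φ : (CLOLang ι).Formula α) (v : α → M) : Prop :=
  letI := CLOStr ι M c
  φ.Realize v

/-- The induced colors on a subset of a CLO. -/
def subColor {ι M : Type} (c : ι → Set M) (s : Set M) : ι → Set s :=
  fun i => {x | (x : M) ∈ c i}

/-- Elementary equivalence of CLOs. -/
def CLOEquiv (ι : Type) (M : Type) [LinearOrder M] (cM : ι → Set M)
    (N : Type) [LinearOrder N] (cN : ι → Set N) : Prop :=
  letI := CLOStr ι M cM
  letI := CLOStr ι N cN
  M ≅[CLOLang ι] N

/-- Isomorphism of CLOs (as `L_κ`-structures). -/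
def CLOIso (ι : Type) (M : Type) [LinearOrder M] (cM : ι → Set M)
    (N : Type) [LinearOrder N] (cN : ι → Set N) : Prop :=
  letI := CLOStr ι M cM
  letI := CLOStr ι N cN
  Nonempty (M ≃[CLOLang ι] N)

/-- The complete theory of a CLO. -/
def CLOTheory (ι : Type) (M : Type) [LinearOrder M] (c : ι → Set M) : (CLOLang ι).Theory :=
  letI := CLOStr ι M c
  (CLOLang ι).completeTheory M

/-- The induced colors on a lexicographic sum `Σₗ i, A i` of CLOs. -/
def sigmaColor {ι I : Type} {A : I → Type} (c : ∀ i, ι → Set (A i)) :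
    ι → Set (Σₗ i, A i) :=
  fun k => {x | (ofLex x).2 ∈ c (ofLex x).1 k}

/-- The induced colors on a two-term lexicographic sum `α ⊕ₗ β` of CLOs. -/
def sumColor2 {ι α β : Type} (ca : ι → Set α) (cb : ι → Set β) : ι → Set (α ⊕ₗ β) :=
  fun k => {x | Sum.elim (· ∈ ca k) (· ∈ cb k) (ofLex x)}

/-- The set defined by a parameter-free formula in one variable in a CLO. -/
def FmlSet (ι : Type) (M : Type) [LinearOrder M] (c : ι → Set M)
    (φ : (CLOLang ι).Formula Unit) : Set M :=
  {x | Sat M c φ fun _ => x}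

/-- A CLO is self-additive if it has more than one point and its only
convex parameter-free-definable subsets are `∅` and the whole order. -/
def SelfAdditive (ι : Type) (M : Type) [LinearOrder M] (c : ι → Set M) : Prop :=
  Nontrivial M ∧
    ∀ φ : (CLOLang ι).Formula Unit, (FmlSet ι M c φ).OrdConnected →
      FmlSet ι M c φ = ∅ ∨ FmlSet ι M c φ = Set.univ

/-- `a ∼ b`: some set definable with parameter `a` is convex, bounded above and
below, and contains both `a` and `b`. -/
def SimRel (ι : Type) {M : Type} [LinearOrder M] (c : ι → Set M) (a b : M) : Prop :=
  ∃ φ : (CLOLang ι).Formula (Unit ⊕ Unit),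
    (Set.OrdConnected {x | Sat M c φ (Sum.elim (fun _ => x) fun _ => a)}) ∧
    (∃ u : M, ∀ z ∈ {x | Sat M c φ (Sum.elim (fun _ => x) fun _ => a)}, z < u) ∧
    (∃ l : M, ∀ z ∈ {x | Sat M c φ (Sum.elim (fun _ => x) fun _ => a)}, l < z) ∧
    a ∈ {x | Sat M c φ (Sum.elim (fun _ => x) fun _ => a)} ∧
    b ∈ {x | Sat M c φ (Sum.elim (fun _ => x) fun _ => a)}

/-- `f : M → N` is an elementary map of CLOs. -/
def IsElemMap (ι : Type) {M N : Type} [LinearOrder M] [LinearOrder N]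
    (cM : ι → Set M) (cN : ι → Set N) (f : M → N) : Prop :=
  ∀ (k : ℕ) (φ : (CLOLang ι).Formula (Fin k)) (v : Fin k → M),
    Sat M cM φ v ↔ Sat N cN φ (f ∘ v)

/-- A subset of a CLO, with its induced structure, is an elementary substructure. -/
def IsElemSubset (ι : Type) (B : Type) [LinearOrder B] (cB : ι → Set B) (s : Set B) : Prop :=
  IsElemMap ι (subColor cB s) cB (Subtype.val : s → B)

/-- A complete `L_κ`-theory is ℵ₀-categorical: any two at-most-countable CLO
models of it are isomorphic.  (Finite and empty models are allowed.) -/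
def Aleph0CatTheory (ι : Type) (T : (CLOLang ι).Theory) : Prop :=
  ∀ (N₁ N₂ : Type) (i₁ : LinearOrder N₁) (i₂ : LinearOrder N₂)
    (c₁ : ι → Set N₁) (c₂ : ι → Set N₂),
    Countable N₁ → Countable N₂ →
    (letI := i₁; CLOTheory ι N₁ c₁) = T → (letI := i₂; CLOTheory ι N₂ c₂) = T →
    (letI := i₁; letI := i₂; CLOIso ι N₁ c₁ N₂ c₂)

/-- `φ` is a convex formula for the complete theory of the CLO `(M₀, c₀)`:
its realizations in every model of that theory form a convex set. -/
def ConvexFml (ι : Type) (M₀ : Type) [LinearOrder M₀] (c₀ : ι → Set M₀)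
    (φ : (CLOLang ι).Formula Unit) : Prop :=
  ∀ (B : Type) (iB : LinearOrder B) (cB : ι → Set B),
    (letI := iB; CLOEquiv ι B cB M₀ c₀) → (letI := iB; Set.OrdConnected (FmlSet ι B cB φ))

/-- The set of common realizations of a set of one-variable formulas in a CLO. -/
def TypeSet (ι : Type) (M : Type) [LinearOrder M] (c : ι → Set M)
    (Φ : Set ((CLOLang ι).Formula Unit)) : Set M :=
  {x | ∀ φ ∈ Φ, Sat M c φ fun _ => x}

/-- A set of one-variable formulas is consistent with the complete theory of
`(M₀, c₀)`: it is realized in some model of that theory. -/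
def TypeConsistent (ι : Type) (M₀ : Type) [LinearOrder M₀] (c₀ : ι → Set M₀)
    (Φ : Set ((CLOLang ι).Formula Unit)) : Prop :=
  ∃ (B : Type) (iB : LinearOrder B) (cB : ι → Set B),
    (letI := iB; CLOEquiv ι B cB M₀ c₀) ∧ (letI := iB; ∃ b : B, b ∈ TypeSet ι B cB Φ)

/-- `Φ` is a convex type of the complete theory of `(M₀, c₀)`: a maximal
consistent set of convex formulas over `∅`.  `IT(T)` is the set of all such. -/
def IsConvexType (ι : Type) (M₀ : Type) [LinearOrder M₀] (c₀ : ι → Set M₀)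
    (Φ : Set ((CLOLang ι).Formula Unit)) : Prop :=
  (∀ φ ∈ Φ, ConvexFml ι M₀ c₀ φ) ∧ TypeConsistent ι M₀ c₀ Φ ∧
    ∀ ψ, ConvexFml ι M₀ c₀ ψ → TypeConsistent ι M₀ c₀ (insert ψ Φ) → ψ ∈ Φ

/-- A convex type is isolated if it contains a convex formula contained in no
other convex type. -/
def IsolatedCT (ι : Type) (M₀ : Type) [LinearOrder M₀] (c₀ : ι → Set M₀)
    (Φ : Set ((CLOLang ι).Formula Unit)) : Prop :=
  ∃ φ ∈ Φ, ConvexFml ι M₀ c₀ φ ∧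
    ∀ Ψ, IsConvexType ι M₀ c₀ Ψ → φ ∈ Ψ → Ψ = Φ

/-- A CLO is ℵ₀-saturated: every finitely-satisfiable set of formulas in one
variable over finitely many parameters is realized. -/
def Aleph0Saturated (ι : Type) (S : Type) [LinearOrder S] (cS : ι → Set S) : Prop :=
  ∀ (m : ℕ) (a : Fin m → S) (p : Set ((CLOLang ι).Formula (Unit ⊕ Fin m))),
    (∀ q : Finset ((CLOLang ι).Formula (Unit ⊕ Fin m)), ↑q ⊆ p →
      ∃ x : S, ∀ φ ∈ q, Sat S cS φ (Sum.elim (fun _ => x) a)) →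
    ∃ x : S, ∀ φ ∈ p, Sat S cS φ (Sum.elim (fun _ => x) a)

/-- A CLO is strongly ℵ₀-homogeneous: finite tuples with the same complete type
are conjugate under an automorphism. -/
def StronglyAleph0Homogeneous (ι : Type) (S : Type) [LinearOrder S] (cS : ι → Set S) : Prop :=
  ∀ (m : ℕ) (a b : Fin m → S),
    (∀ φ : (CLOLang ι).Formula (Fin m), Sat S cS φ a ↔ Sat S cS φ b) →
    ∃ g : S ≃ S, (∀ x y : S, x < y ↔ g x < g y) ∧
      (∀ (k : ι) (x : S), x ∈ cS k ↔ g x ∈ cS k) ∧ ∀ i, g (a i) = b i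

/-- Sufficiently saturated: ℵ₀-saturated and strongly ℵ₀-homogeneous. -/
def SuffSaturated (ι : Type) (S : Type) [LinearOrder S] (cS : ι → Set S) : Prop :=
  Aleph0Saturated ι S cS ∧ StronglyAleph0Homogeneous ι S cS

/-- The complete theory of `(M₀, c₀)` is locally simple: for every sufficiently
saturated model `S` and every convex type `Φ`, the theory `T_Φ = Th(Φ(S))` is
ℵ₀-categorical. -/
def LocallySimple (ι : Type) (M₀ : Type) [LinearOrder M₀] (c₀ : ι → Set M₀) : Prop :=
  ∀ (S : Type) [LinearOrder S], ∀ (cS : ι → Set S),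
    CLOEquiv ι S cS M₀ c₀ → SuffSaturated ι S cS →
    ∀ Φ, IsConvexType ι M₀ c₀ Φ →
      Aleph0CatTheory ι
        (CLOTheory ι (TypeSet ι S cS Φ) (subColor cS (TypeSet ι S cS Φ)))

/-- A finite set of pairs is a partial isomorphism of CLOs: it preserves `<`,
equality, and each color, in both directions. -/
def IsPartialIso (ι : Type) {M N : Type} [LinearOrder M] [LinearOrder N]
    (cM : ι → Set M) (cN : ι → Set N) (f : Finset (M × N)) : Prop :=
  ∀ p ∈ f, ∀ q ∈ f,
    (p.1 < q.1 ↔ p.2 < q.2) ∧ (p.1 = q.1 ↔ p.2 = q.2) ∧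
    ∀ k, p.1 ∈ cM k ↔ p.2 ∈ cN k

/-- Back-and-forth equivalence of CLOs: a nonempty family of finite partial
isomorphisms with the back-and-forth extension properties. -/
def BackForthEquiv (ι : Type) (M : Type) [LinearOrder M] (cM : ι → Set M)
    (N : Type) [LinearOrder N] (cN : ι → Set N) : Prop :=
  ∃ F : Set (Finset (M × N)), F.Nonempty ∧ (∀ f ∈ F, IsPartialIso ι cM cN f) ∧
    (∀ f ∈ F, ∀ m : M, ∃ g ∈ F, f ⊆ g ∧ ∃ n : N, (m, n) ∈ g) ∧
    (∀ f ∈ F, ∀ n : N, ∃ g ∈ F, f ⊆ g ∧ ∃ m : M, (m, n) ∈ g)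

/-- The set of complete theories `Th(Φ(A))` as `A` ranges over models of the
complete theory of `(M₀, c₀)` (including the theory of the empty structure,
in case `Φ` is omitted). -/
def TheoriesAt (ι : Type) (M₀ : Type) [LinearOrder M₀] (c₀ : ι → Set M₀)
    (Φ : Set ((CLOLang ι).Formula Unit)) : Set ((CLOLang ι).Theory) :=
  {T | ∃ (A : Type) (iA : LinearOrder A) (cA : ι → Set A),
    (letI := iA; CLOEquiv ι A cA M₀ c₀) ∧
    T = (letI := iA; CLOTheory ι (TypeSet ι A cA Φ) (subColor cA (TypeSet ι A cA Φ)))}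

/-!
Let `S` be an `ℵ₀`-saturated model and `Φ` a convex type. The set `Φ(S)` is convex, so an order
comparison between a point of `Φ(S)` and a point outside does not depend on which point of `Φ(S)` is
taken. By a back-and-forth argument that fixes everything outside `Φ(S)`, two points of `Φ(S)` with
the same type over `∅` therefore have the same type over any finite tuple `a` outside `Φ(S)`. Hence
if a nonempty set definable over such an `a` is contained in `Φ(S)`, then so is, by compactness, a
nonempty set definable over `∅`; the convex hull of the latter isolates `Φ`.

So the complement of `Φ(S)` is dense for the sets definable over `a` when `Φ` is not isolated, and
by Baire category every nonempty set definable over `a` has a point that realizes none of countably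
many nonisolated convex types, as long as no entry of `a` does. The Tarski–Vaught test and
Löwenheim–Skolem then give, for any subset of a countable set of nonisolated convex types, a
countable model realizing precisely the members of that subset, and the set of realized types is an
isomorphism invariant.
-/

section RelationalLanguage

variable {L : Language} {M N : Type*} [L.Structure M] [L.Structure N]

lemma exists_term_eq_var [L.IsRelational] {α : Type*} (t : L.Term α) : ∃ a, t = Term.var a := by
  rcases t with a | f
  · exact ⟨a, rfl⟩
  · exact isEmptyElim f

/-- A back-and-forth system between two structures: a family of partial isomorphisms, given by
their graphs, any of which extends within the family to any prescribed point on either side.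
The graphs may be infinite. -/
structure IsBackForthSystem (L : Language) [L.Structure M] [L.Structure N]
    (F : Set (Set (M × N))) : Prop where
  eq_iff : ∀ f ∈ F, ∀ p ∈ f, ∀ q ∈ f, p.1 = q.1 ↔ p.2 = q.2
  relMap_iff : ∀ f ∈ F, ∀ {n : ℕ} (R : L.Relations n) (p : Fin n → M × N), (∀ i, p i ∈ f) →
    (Structure.RelMap R (fun i => (p i).1) ↔ Structure.RelMap R fun i => (p i).2)
  forth : ∀ f ∈ F, ∀ x, ∃ g ∈ F, f ⊆ g ∧ ∃ y, (x, y) ∈ g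
  back : ∀ f ∈ F, ∀ y, ∃ g ∈ F, f ⊆ g ∧ ∃ x, (x, y) ∈ g

theorem IsBackForthSystem.realize_iff [L.IsRelational] {F : Set (Set (M × N))}
    (hF : IsBackForthSystem L F) {α : Type*} {n : ℕ} (φ : L.BoundedFormula α n)
    {f : Set (M × N)} (hf : f ∈ F) {p : α → M × N} (hp : ∀ a, p a ∈ f)
    {q : Fin n → M × N} (hq : ∀ i, q i ∈ f) :
    φ.Realize (Prod.fst ∘ p) (Prod.fst ∘ q) ↔ φ.Realize (Prod.snd ∘ p) (Prod.snd ∘ q) := by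
  induction φ generalizing f with
  | falsum => exact Iff.rfl
  | equal t₁ t₂ =>
    obtain ⟨a, rfl⟩ := exists_term_eq_var t₁
    obtain ⟨b, rfl⟩ := exists_term_eq_var t₂
    have hpq : ∀ c, Sum.elim p q c ∈ f := Sum.rec hp hq
    simpa only [BoundedFormula.Realize, Term.realize_var, ← Sum.comp_elim,
      Function.comp_apply] using
      hF.eq_iff f hf _ (hpq a) _ (hpq b)
  | rel R ts =>
    choose a ha using fun i => exists_term_eq_var (ts i)
    have hpq : ∀ c, Sum.elim p q c ∈ f := Sum.rec hp hq
    simpa only [BoundedFormula.Realize, ha, Term.realize_var, ← Sum.comp_elim,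
      Function.comp_apply] using
      hF.relMap_iff f hf R _ fun i => hpq (a i)
  | imp φ ψ ihφ ihψ => exact imp_congr (ihφ hf hp hq) (ihψ hf hp hq)
  | all φ ih =>
    have key : ∀ g ∈ F, f ⊆ g → ∀ r ∈ g,
        (φ.Realize (Prod.fst ∘ p) (Fin.snoc (Prod.fst ∘ q) r.1) ↔
          φ.Realize (Prod.snd ∘ p) (Fin.snoc (Prod.snd ∘ q) r.2)) := by
      intro g hg hfg r hr
      simpa only [Fin.comp_snoc] using ih hg (fun a => hfg (hp a))
        (q := Fin.snoc q r) (Fin.lastCases (by simpa using hr) fun i => by simpa using hfg (hq i))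
    constructor <;> intro h
    · intro y
      obtain ⟨g, hg, hfg, x, hxy⟩ := hF.back f hf y
      exact (key g hg hfg _ hxy).1 (h x)
    · intro x
      obtain ⟨g, hg, hfg, y, hxy⟩ := hF.forth f hf x
      exact (key g hg hfg _ hxy).2 (h y)

lemma exists_elementarySubstructure_coe_eq [L.IsRelational] {A : Set M}
    (hA : ∀ (n : ℕ) (θ : L.Formula (Unit ⊕ Fin n)) (a : Fin n → M), (∀ i, a i ∈ A) →
      ∀ x, θ.Realize (Sum.elim (fun _ => x) a) → ∃ y ∈ A, θ.Realize (Sum.elim (fun _ => y) a)) :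
    ∃ N : L.ElementarySubstructure M, (N : Set M) = A := by
  let A' : L.Substructure M := ⟨A, fun f => isEmptyElim f⟩
  refine ⟨A'.toElementarySubstructure fun n φ a x hx => ?_, rfl⟩
  let g : Empty ⊕ Fin (n + 1) → Unit ⊕ Fin n :=
    Sum.elim Empty.elim (Fin.lastCases (Sum.inl ()) Sum.inr)
  have hg : ∀ y : M, (φ.toFormula.relabel g).Realize (Sum.elim (fun _ => y) ((↑) ∘ a)) ↔
      φ.Realize default (Fin.snoc ((↑) ∘ a) y : Fin (n + 1) → M) := by
    intro y
    rw [Formula.realize_relabel, BoundedFormula.realize_toFormula]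
    congr! 1
    funext i
    induction i using Fin.lastCases <;> simp [g]
  obtain ⟨y, hy, hφ⟩ := hA n _ _ (fun i => (a i).2) x ((hg x).2 hx)
  exact ⟨⟨y, hy⟩, (hg y).1 hφ⟩

lemma exists_countable_elementarySubstructure [Countable L.Symbols] {X : Set M}
    (hX : X.Countable) : ∃ N : L.ElementarySubstructure M, X ⊆ N ∧ Countable N := by
  obtain _ | _ := finite_or_infinite M
  · exact ⟨⊤, Set.subset_univ X, inferInstance⟩
  · have hL : L.card ≤ Cardinal.aleph0 := Cardinal.mk_le_aleph0
    obtain ⟨N, hXN, hN⟩ := exists_elementarySubstructure_card_eq L X Cardinal.aleph0.{0} le_rfl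
      (by simpa using hX.le_aleph0) (by simpa using hL) (by simp)
    exact ⟨N, hXN, Cardinal.mk_le_aleph0_iff.1 (by simpa using hN.le)⟩

end RelationalLanguage

section Formulas

variable {ι M N α β : Type} [LinearOrder M] {c : ι → Set M} [LinearOrder N] {cN : ι → Set N}

instance isRelational_cloLang : (CLOLang ι).IsRelational :=
  fun _ => inferInstanceAs (IsEmpty Empty)

instance countable_symbols_cloLang [Countable ι] : Countable (CLOLang ι).Symbols := by
  have hrel : Function.Surjective fun o : Option ι =>
      (o.elim ⟨2, CLORel.lt⟩ fun i => ⟨1, CLORel.color i⟩ : Σ n, CLORel ι n) := by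
    rintro ⟨_, _ | i⟩
    · exact ⟨none, rfl⟩
    · exact ⟨some i, rfl⟩
  have : Countable (Σ n, (CLOLang ι).Relations n) := hrel.countable
  exact inferInstanceAs (Countable ((Σ n, (CLOLang ι).Functions n) ⊕ _))

/-- The formula `x i < x j`. -/
def ltFml (ι : Type) (i j : α) : (CLOLang ι).Formula α :=
  Relations.formula₂ (L := CLOLang ι) (CLORel.lt : CLORel ι 2) (Term.var i) (Term.var j)

/-- The formula stating that `x i` has color `k`. -/
def colorFml (k : ι) (i : α) : (CLOLang ι).Formula α :=
  Relations.formula₁ (L := CLOLang ι) (CLORel.color k : CLORel ι 1) (Term.var i)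

lemma sat_ltFml {i j : α} {v : α → M} : Sat M c (ltFml ι i j) v ↔ v i < v j := by
  let _ := CLOStr ι M c
  exact Formula.realize_rel₂

lemma sat_colorFml {k : ι} {i : α} {v : α → M} : Sat M c (colorFml k i) v ↔ v i ∈ c k := by
  let _ := CLOStr ι M c
  exact Formula.realize_rel₁

lemma sat_relabel {φ : (CLOLang ι).Formula α} {g : α → β} {v : β → M} :
    Sat M c (φ.relabel g) v ↔ Sat M c φ (v ∘ g) := by
  let _ := CLOStr ι M c
  exact Formula.realize_relabel

lemma sat_not {φ : (CLOLang ι).Formula α} {v : α → M} : Sat M c φ.not v ↔ ¬ Sat M c φ v := by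
  let _ := CLOStr ι M c
  exact Formula.realize_not

lemma sat_inf {φ ψ : (CLOLang ι).Formula α} {v : α → M} :
    Sat M c (φ ⊓ ψ) v ↔ Sat M c φ v ∧ Sat M c ψ v := by
  let _ := CLOStr ι M c
  exact Formula.realize_inf

lemma sat_iInf [Finite β] {f : β → (CLOLang ι).Formula α} {v : α → M} :
    Sat M c (Formula.iInf f) v ↔ ∀ b, Sat M c (f b) v := by
  let _ := CLOStr ι M c
  exact Formula.realize_iInf

lemma sat_iExs [Finite β] {φ : (CLOLang ι).Formula (α ⊕ β)} {v : α → M} :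
    Sat M c (φ.iExs β) v ↔ ∃ w : β → M, Sat M c φ (Sum.elim v w) := by
  let _ := CLOStr ι M c
  exact Formula.realize_iExs

/-- The formula `∃ x, φ(x, v)`. -/
noncomputable def exFml (φ : (CLOLang ι).Formula (Unit ⊕ β)) : (CLOLang ι).Formula β :=
  (φ.relabel Sum.swap).iExs Unit

lemma sat_exFml {φ : (CLOLang ι).Formula (Unit ⊕ β)} {v : β → M} :
    Sat M c (exFml φ) v ↔ ∃ x, Sat M c φ (Sum.elim (fun _ => x) v) := by
  simp only [exFml, sat_iExs, sat_relabel, Sum.elim_swap]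
  exact ⟨fun ⟨w, hw⟩ => ⟨w (), hw⟩, fun ⟨x, hx⟩ => ⟨fun _ => x, hx⟩⟩

/-- The formula defining the convex hull of the set defined by `φ`. -/
noncomputable def hullFml (φ : (CLOLang ι).Formula Unit) : (CLOLang ι).Formula Unit :=
  Formula.iExs Bool
    (φ.relabel (fun _ => Sum.inr false) ⊓ φ.relabel (fun _ => Sum.inr true) ⊓
      (ltFml ι (Sum.inl ()) (Sum.inr false)).not ⊓ (ltFml ι (Sum.inr true) (Sum.inl ())).not)

lemma mem_fmlSet_hullFml {φ : (CLOLang ι).Formula Unit} {x : M} :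
    x ∈ FmlSet ι M c (hullFml φ) ↔ ∃ y ∈ FmlSet ι M c φ, ∃ z ∈ FmlSet ι M c φ, x ∈ Icc y z := by
  change Sat M c (hullFml φ) (fun _ => x) ↔
    ∃ y, Sat M c φ (fun _ => y) ∧ ∃ z, Sat M c φ (fun _ => z) ∧ y ≤ x ∧ x ≤ z
  simp only [hullFml, sat_iExs, sat_inf, sat_relabel, sat_not, sat_ltFml, not_lt, and_assoc]
  constructor
  · rintro ⟨w, hy, hz, hyx, hxz⟩
    exact ⟨w false, hy, w true, hz, hyx, hxz⟩
  · rintro ⟨y, hy, z, hz, hyx, hxz⟩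
    exact ⟨fun b => bif b then z else y, hy, hz, hyx, hxz⟩

lemma ordConnected_fmlSet_hullFml (φ : (CLOLang ι).Formula Unit) :
    (FmlSet ι M c (hullFml φ)).OrdConnected := by
  refine ⟨fun a ha b hb x hx => ?_⟩
  obtain ⟨y, hy, -, -, hya, -⟩ := mem_fmlSet_hullFml.1 ha
  obtain ⟨-, -, z, hz, -, hbz⟩ := mem_fmlSet_hullFml.1 hb
  exact mem_fmlSet_hullFml.2 ⟨y, hy, z, hz, hya.trans hx.1, hx.2.trans hbz⟩

lemma CLOEquiv.symm (h : CLOEquiv ι M c N cN) : CLOEquiv ι N cN M c :=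
  Eq.symm h

lemma CLOEquiv.trans {K : Type} [LinearOrder K] {cK : ι → Set K} (h : CLOEquiv ι M c N cN)
    (h' : CLOEquiv ι N cN K cK) : CLOEquiv ι M c K cK :=
  Eq.trans h h'

lemma CLOEquiv.nonempty_fmlSet (h : CLOEquiv ι M c N cN) {φ : (CLOLang ι).Formula Unit}
    (hφ : (FmlSet ι M c φ).Nonempty) : (FmlSet ι N cN φ).Nonempty := by
  let _ := CLOStr ι M c
  let _ := CLOStr ι N cN
  let ψ : (CLOLang ι).Sentence := exFml (φ.relabel Sum.inl)
  have hM : M ⊨ ψ := sat_exFml.2 (hφ.imp fun _ => sat_relabel.2)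
  exact (sat_exFml.1 ((h.realize_sentence ψ).1 hM)).imp fun _ => sat_relabel.1

/-- The complete type of a tuple. -/
def tupleType (c : ι → Set M) (d : α → M) : Set ((CLOLang ι).Formula α) :=
  {φ | Sat M c φ d}

lemma tupleType_eq_of_subset {d : α → M} {d' : α → N} (h : tupleType c d ⊆ tupleType cN d') :
    tupleType c d = tupleType cN d' :=
  h.antisymm fun _ hφ => of_not_not fun hn => sat_not.1 (h (sat_not.2 hn)) hφ

lemma tupleType_comp_congr {d d' : α → M} (h : tupleType c d = tupleType c d') (g : β → α) :
    tupleType c (d ∘ g) = tupleType c (d' ∘ g) := by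
  ext φ
  simpa only [tupleType, mem_ofPred_eq, sat_relabel] using Set.ext_iff.1 h (φ.relabel g)

end Formulas

section Ultrapower

open Filter

variable {ι M I : Type} [LinearOrder M] {c : ι → Set M} {u : Ultrafilter I}

/-- The colors of the ultrapower `(u : Filter I).Germ M` of a CLO with colors `c`. -/
def germColor (u : Ultrafilter I) (c : ι → Set M) : ι → Set ((u : Filter I).Germ M) :=
  fun k => {x | x.LiftPred (· ∈ c k)}

lemma cloStr_germ :
    CLOStr ι ((u : Filter I).Germ M) (germColor u c) =
      letI := CLOStr ι M c
      (Ultraproduct.structure : (CLOLang ι).Structure ((u : Filter I).Product fun _ => M)) := by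
  let _ := CLOStr ι M c
  ext n R x
  · exact isEmptyElim R
  · choose X hX using fun i => Quotient.exists_rep (x i)
    obtain rfl : (fun i => (X i : (u : Filter I).Germ M)) = x := funext hX
    refine .trans ?_ (relMap_quotient_mk' (s := (u : Filter I).productSetoid fun _ => M) R X).symm
    cases R with
    | lt => exact Germ.coe_lt
    | color k => exact Germ.liftPred_coe

theorem sat_germ [Nonempty M] {α : Type} {φ : (CLOLang ι).Formula α} {X : α → I → M} :
    Sat ((u : Filter I).Germ M) (germColor u c) φ (fun j => (X j : (u : Filter I).Germ M)) ↔
      ∀ᶠ i in u, Sat M c φ fun j => X j i := by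
  let _ := CLOStr ι M c
  unfold Sat
  rw [cloStr_germ]
  exact Ultraproduct.realize_formula_cast φ X

lemma cloEquiv_germ [Nonempty M] : CLOEquiv ι ((u : Filter I).Germ M) (germColor u c) M c := by
  let _ := CLOStr ι M c
  unfold CLOEquiv
  rw [cloStr_germ]
  change (u : Filter I).Product (fun _ => M) ≅[CLOLang ι] M
  exact elementarilyEquivalent_iff.2 fun φ => by
    rw [Ultraproduct.sentence_realize, eventually_const]

lemma exists_seq_forall_eventually_of_le_atTop {l : Filter ℕ} (hl : l ≤ atTop) {K X : Type*}
    [Countable K] [Nonempty X] {P : K → ℕ → X → Prop}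
    (h : ∀ s : Finset K, ∀ᶠ i in l, ∃ x, ∀ k ∈ s, P k i x) :
    ∃ x : ℕ → X, ∀ k, ∀ᶠ i in l, P k i (x i) := by
  classical
  obtain ⟨f, hf⟩ := Countable.exists_injective_nat K
  let G (n i : ℕ) : Prop := ∃ x, ∀ k, f k < n → P k i x
  have hG (n : ℕ) : ∀ᶠ i in l, G n i := by
    have hfin : {k | f k < n}.Finite := (finite_lt_nat n).preimage hf.injOn
    simpa only [hfin.mem_toFinset, mem_ofPred_eq] using h hfin.toFinset
  have hG₀ (i : ℕ) : G 0 i := ⟨Classical.arbitrary X, fun _ hk => (Nat.not_lt_zero _ hk).elim⟩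
  choose x hx using fun i => Nat.findGreatest_spec (P := (G · i)) i.zero_le (hG₀ i)
  refine ⟨x, fun k => ?_⟩
  filter_upwards [hG (f k + 1), hl (eventually_ge_atTop (f k + 1))] with i hi hki
  exact hx i k (Nat.le_findGreatest hki hi)

theorem aleph0Saturated_germ_hyperfilter [Countable ι] [Nonempty M] :
    Aleph0Saturated ι ((hyperfilter ℕ : Filter ℕ).Germ M) (germColor (hyperfilter ℕ) c) := by
  intro m a p hp
  choose A hA using fun j => Quotient.exists_rep (a j)
  obtain rfl : (fun j => (A j : (hyperfilter ℕ : Filter ℕ).Germ M)) = a := funext hA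
  have los (φ : (CLOLang ι).Formula (Unit ⊕ Fin m)) (X : ℕ → M) :
      Sat ((hyperfilter ℕ : Filter ℕ).Germ M) (germColor (hyperfilter ℕ) c) φ
          (Sum.elim (fun _ => ↑X) fun j => ↑(A j)) ↔
        ∀ᶠ i in hyperfilter ℕ, Sat M c φ (Sum.elim (fun _ => X i) fun j => A j i) := by
    convert sat_germ (u := hyperfilter ℕ) (X := Sum.elim (fun _ => X) A) using 5 with j i j <;>
      cases j <;> rfl
  obtain ⟨X, hX⟩ := exists_seq_forall_eventually_of_le_atTop Nat.hyperfilter_le_atTop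
    (P := fun (φ : p) i x => Sat M c φ.1 (Sum.elim (fun _ => x) fun j => A j i)) fun s => by
      obtain ⟨x, hx⟩ := hp (s.map (Function.Embedding.subtype _)) (by simp)
      obtain ⟨X, rfl⟩ := Quotient.exists_rep x
      have h : ∀ᶠ i in hyperfilter ℕ, ∀ φ ∈ s,
          Sat M c φ.1 (Sum.elim (fun _ => X i) fun j => A j i) :=
        (eventually_all_finset s).2 fun φ hφ => (los φ.1 X).1 (hx φ.1 (by simpa using hφ))
      exact h.mono fun i hi => ⟨X i, hi⟩
  exact ⟨X, fun φ hφ => (los φ X).2 (hX ⟨φ, hφ⟩)⟩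

end Ultrapower

section Saturation

variable {ι S J β K : Type} [LinearOrder S] {cS : ι → Set S}

/-- The set defined by the formula `θ(x, a)` with parameters `a`. -/
def FmlSetOver (cS : ι → Set S) (a : β → S) (θ : (CLOLang ι).Formula (Unit ⊕ β)) : Set S :=
  {x | Sat S cS θ (Sum.elim (fun _ => x) a)}

lemma Aleph0Saturated.exists_forall_mem_fmlSetOver (hS : Aleph0Saturated ι S cS) [Finite β]
    {a : β → S} {θ : K → (CLOLang ι).Formula (Unit ⊕ β)}
    (h : ∀ s : Finset K, ∃ x, ∀ k ∈ s, x ∈ FmlSetOver cS a (θ k)) :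
    ∃ x, ∀ k, x ∈ FmlSetOver cS a (θ k) := by
  classical
  obtain ⟨n, ⟨e⟩⟩ := Finite.exists_equiv_fin β
  have hrel (x : S) (k : K) : x ∈ FmlSetOver cS (a ∘ e.symm) ((θ k).relabel (Sum.map id e)) ↔
      x ∈ FmlSetOver cS a (θ k) := by
    simp only [FmlSetOver, mem_ofPred_eq, sat_relabel, Sum.elim_comp_map, Function.comp_id,
      Function.comp_assoc, Equiv.symm_comp_self]
  obtain ⟨x, hx⟩ := hS n (a ∘ e.symm) (range fun k => (θ k).relabel (Sum.map id e)) fun q hq => by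
    rw [← image_univ] at hq
    obtain ⟨s, -, rfl⟩ := Finset.subset_set_image_iff.1 hq
    obtain ⟨x, hx⟩ := h s
    exact ⟨x, Finset.forall_mem_image.2 fun k hk => (hrel x k).2 (hx k hk)⟩
  exact ⟨x, fun k => (hrel x k).1 (hx _ (mem_range_self k))⟩

lemma Aleph0Saturated.exists_tupleType_elim_eq (hS : Aleph0Saturated ι S cS) [Finite J]
    {d d' : J → S} (h : tupleType cS d = tupleType cS d') (x : S) :
    ∃ x', tupleType cS (Sum.elim (fun _ : Unit => x) d) =
      tupleType cS (Sum.elim (fun _ : Unit => x') d') := by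
  obtain ⟨x', hx'⟩ := hS.exists_forall_mem_fmlSetOver (a := d')
    (θ := fun φ : tupleType cS (Sum.elim (fun _ : Unit => x) d) => φ.1) fun s => by
      have hd : exFml (Formula.iInf fun φ : s => φ.1.1) ∈ tupleType cS d :=
        sat_exFml.2 ⟨x, sat_iInf.2 fun φ => φ.1.2⟩
      obtain ⟨y, hy⟩ := sat_exFml.1 (h ▸ hd)
      exact ⟨y, fun φ hφ => sat_iInf.1 hy ⟨φ, hφ⟩⟩
  exact ⟨x', tupleType_eq_of_subset fun φ hφ => hx' ⟨φ, hφ⟩⟩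

lemma Aleph0Saturated.exists_mem_tupleType_fmlSet_subset (hS : Aleph0Saturated ι S cS) [Finite β]
    {a : β → S} {θ : (CLOLang ι).Formula (Unit ⊕ β)} {b : S}
    (h : ∀ b', tupleType cS (fun _ : Unit => b) = tupleType cS (fun _ : Unit => b') →
      b' ∈ FmlSetOver cS a θ) :
    ∃ φ ∈ tupleType cS (fun _ : Unit => b), FmlSet ι S cS φ ⊆ FmlSetOver cS a θ := by
  by_contra! hno
  obtain ⟨b', hb'⟩ := hS.exists_forall_mem_fmlSetOver (a := a)
    (θ := fun φ : tupleType cS (fun _ : Unit => b) => φ.1.relabel Sum.inl ⊓ θ.not) fun s => by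
      obtain ⟨x, hx, hxθ⟩ := not_subset.1 <|
        hno (Formula.iInf fun φ : s => φ.1.1) (sat_iInf.2 fun φ => φ.1.2)
      exact ⟨x, fun φ hφ => sat_inf.2 ⟨sat_relabel.2 (sat_iInf.1 hx ⟨φ, hφ⟩), sat_not.2 hxθ⟩⟩
  have htype : tupleType cS (fun _ : Unit => b) = tupleType cS (fun _ : Unit => b') :=
    tupleType_eq_of_subset fun φ hφ => sat_relabel.1 (sat_inf.1 (hb' ⟨φ, hφ⟩)).1
  exact sat_not.1 (sat_inf.1 (hb' ⟨⊤, id⟩)).2 (h b' htype)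

end Saturation

section Swap

variable {ι S J : Type} {cS : ι → Set S} {C : Set S} {d d' : J → S}
  {Φ : Set ((CLOLang ι).Formula Unit)}

/-- The graph of the partial map that moves the tuple `d` to `d'` and fixes everything outside
`C`. -/
def swapGraph (C : Set S) (d d' : J → S) : Set (S × S) :=
  range (fun i => (d i, d' i)) ∪ {p | p.1 ∉ C ∧ p.1 = p.2}

lemma swap_preimage_swapGraph : Prod.swap ⁻¹' swapGraph C d d' = swapGraph C d' d := by
  ext ⟨x, y⟩
  simp only [swapGraph, mem_preimage, Prod.swap_prod_mk, mem_union, mem_range, Prod.mk.injEq,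
    mem_ofPred_eq]
  grind

variable [LinearOrder S]

lemma fst_lt_fst_iff_of_mem_swapGraph (hC : C.OrdConnected) (hd : ∀ i, d i ∈ C)
    (hd' : ∀ i, d' i ∈ C) (hT : tupleType cS d = tupleType cS d') {p q : S × S}
    (hp : p ∈ swapGraph C d d') (hq : q ∈ swapGraph C d d') : p.1 < q.1 ↔ p.2 < q.2 := by
  have hside : ∀ x ∈ C, ∀ y ∈ C, ∀ z ∉ C, (x < z → y < z) ∧ (z < x → z < y) :=
    fun x hx y hy z hz => ⟨fun hxz => not_le.1 fun hzy => hz (hC.out hx hy ⟨hxz.le, hzy⟩),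
      fun hzx => not_le.1 fun hyz => hz (hC.out hy hx ⟨hyz, hzx.le⟩)⟩
  obtain ⟨i, rfl⟩ | ⟨hpC, hp⟩ := hp <;> obtain ⟨j, rfl⟩ | ⟨hqC, hq⟩ := hq
  · simpa only [tupleType, mem_ofPred_eq, sat_ltFml] using Set.ext_iff.1 hT (ltFml ι i j)
  · rw [← hq]
    exact ⟨(hside _ (hd i) _ (hd' i) _ hqC).1, (hside _ (hd' i) _ (hd i) _ hqC).1⟩
  · rw [← hp]
    exact ⟨(hside _ (hd j) _ (hd' j) _ hpC).2, (hside _ (hd' j) _ (hd j) _ hpC).2⟩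
  · rw [← hp, ← hq]

lemma fst_mem_iff_of_mem_swapGraph (hT : tupleType cS d = tupleType cS d') {p : S × S}
    (hp : p ∈ swapGraph C d d') (k : ι) : p.1 ∈ cS k ↔ p.2 ∈ cS k := by
  obtain ⟨i, rfl⟩ | ⟨-, hp⟩ := hp
  · simpa only [tupleType, mem_ofPred_eq, sat_colorFml] using Set.ext_iff.1 hT (colorFml k i)
  · rw [hp]

lemma mem_typeSet_iff_of_tupleType_eq (hT : tupleType cS d = tupleType cS d') (i : J) :
    d i ∈ TypeSet ι S cS Φ ↔ d' i ∈ TypeSet ι S cS Φ := by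
  change Φ ⊆ tupleType cS (d ∘ fun _ => i) ↔ Φ ⊆ tupleType cS (d' ∘ fun _ => i)
  rw [tupleType_comp_congr hT]

/-- The partial maps of `S` that move finitely many points of `Φ(S)` to points of the same type
and fix everything outside `Φ(S)`. -/
def swapSystem (cS : ι → Set S) (Φ : Set ((CLOLang ι).Formula Unit)) : Set (Set (S × S)) :=
  {f | ∃ (J : Type) (_ : Finite J) (d d' : J → S), (∀ i, d i ∈ TypeSet ι S cS Φ) ∧
    tupleType cS d = tupleType cS d' ∧ f = swapGraph (TypeSet ι S cS Φ) d d'}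

lemma swap_preimage_mem_swapSystem {f : Set (S × S)} (hf : f ∈ swapSystem cS Φ) :
    Prod.swap ⁻¹' f ∈ swapSystem cS Φ := by
  obtain ⟨J, hJ, d, d', hd, hT, rfl⟩ := hf
  exact ⟨J, hJ, d', d, fun i => (mem_typeSet_iff_of_tupleType_eq hT i).1 (hd i), hT.symm,
    swap_preimage_swapGraph⟩

lemma Aleph0Saturated.exists_mem_swapSystem (hS : Aleph0Saturated ι S cS) {f : Set (S × S)}
    (hf : f ∈ swapSystem cS Φ) (x : S) :
    ∃ g ∈ swapSystem cS Φ, f ⊆ g ∧ ∃ y, (x, y) ∈ g := by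
  by_cases hx : x ∈ TypeSet ι S cS Φ
  · obtain ⟨J, hJ, d, d', hd, hT, rfl⟩ := hf
    obtain ⟨y, hy⟩ := hS.exists_tupleType_elim_eq hT x
    refine ⟨_, ⟨Unit ⊕ J, inferInstance, _, _, Sum.rec (fun _ => hx) hd, hy, rfl⟩,
      union_subset_union_left _ ?_, y, Or.inl ⟨Sum.inl (), rfl⟩⟩
    rintro _ ⟨i, rfl⟩
    exact ⟨Sum.inr i, rfl⟩
  · refine ⟨f, hf, Subset.rfl, x, ?_⟩
    obtain ⟨J, -, d, d', -, -, rfl⟩ := hf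
    exact Or.inr ⟨hx, rfl⟩

lemma Aleph0Saturated.isBackForthSystem_swapSystem (hS : Aleph0Saturated ι S cS)
    (hC : (TypeSet ι S cS Φ).OrdConnected) :
    letI := CLOStr ι S cS
    IsBackForthSystem (CLOLang ι) (swapSystem cS Φ) := by
  let _ := CLOStr ι S cS
  have hlt : ∀ f ∈ swapSystem cS Φ, ∀ p ∈ f, ∀ q ∈ f, p.1 < q.1 ↔ p.2 < q.2 := by
    rintro _ ⟨J, -, d, d', hd, hT, rfl⟩ p hp q hq
    exact fst_lt_fst_iff_of_mem_swapGraph hC hd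
      (fun i => (mem_typeSet_iff_of_tupleType_eq hT i).1 (hd i)) hT hp hq
  refine ⟨fun f hf p hp q hq => ?_, fun f hf n R p hp => ?_, fun f => hS.exists_mem_swapSystem,
    fun f hf y => ?_⟩
  · simp only [le_antisymm_iff, ← not_lt, hlt f hf p hp q hq, hlt f hf q hq p hp]
  · cases R with
    | lt => exact hlt f hf _ (hp 0) _ (hp 1)
    | color k =>
      obtain ⟨J, -, d, d', -, hT, rfl⟩ := hf
      exact fst_mem_iff_of_mem_swapGraph hT (hp 0) k
  · obtain ⟨g, hg, hfg, x, hx⟩ := hS.exists_mem_swapSystem (swap_preimage_mem_swapSystem hf) y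
    exact ⟨_, swap_preimage_mem_swapSystem hg, fun p hp => hfg (by simpa using hp), x, hx⟩

theorem Aleph0Saturated.tupleType_elim_eq_of_notMem_typeSet (hS : Aleph0Saturated ι S cS)
    (hC : (TypeSet ι S cS Φ).OrdConnected) {b b' : S} (hb : b ∈ TypeSet ι S cS Φ)
    (hT : tupleType cS (fun _ : Unit => b) = tupleType cS (fun _ : Unit => b')) {a : J → S}
    (ha : ∀ j, a j ∉ TypeSet ι S cS Φ) :
    tupleType cS (Sum.elim (fun _ : Unit => b) a) =
      tupleType cS (Sum.elim (fun _ : Unit => b') a) := by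
  let _ := CLOStr ι S cS
  let f := swapGraph (TypeSet ι S cS Φ) (fun _ : Unit => b) fun _ => b'
  have hf : f ∈ swapSystem cS Φ := ⟨Unit, inferInstance, _, _, fun _ => hb, hT, rfl⟩
  let p : Unit ⊕ J → S × S := Sum.elim (fun _ => (b, b')) fun j => (a j, a j)
  have hp : ∀ j, p j ∈ f := Sum.rec (fun _ => Or.inl ⟨(), rfl⟩) fun j => Or.inr ⟨ha j, rfl⟩
  ext φ
  have key := (hS.isBackForthSystem_swapSystem hC).realize_iff φ hf hp (q := Fin.elim0)
    fun i => i.elim0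
  simp only [p, Sum.comp_elim, Subsingleton.elim _ default] at key
  exact key

end Swap

section ConvexTypes

variable {ι M₀ S β : Type} [LinearOrder M₀] {c₀ : ι → Set M₀} [LinearOrder S] {cS : ι → Set S}
  {Φ Ψ : Set ((CLOLang ι).Formula Unit)}

lemma IsConvexType.ordConnected_typeSet (hΦ : IsConvexType ι M₀ c₀ Φ)
    (hE : CLOEquiv ι S cS M₀ c₀) : (TypeSet ι S cS Φ).OrdConnected :=
  ⟨fun _ ha _ hb _ hx φ hφ => (hΦ.1 φ hφ S _ cS hE).out (ha φ hφ) (hb φ hφ) hx⟩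

lemma convexFml_hullFml (φ : (CLOLang ι).Formula Unit) : ConvexFml ι M₀ c₀ (hullFml φ) :=
  fun _ _ _ _ => ordConnected_fmlSet_hullFml φ

lemma IsConvexType.mem_of_mem_typeSet (hΦ : IsConvexType ι M₀ c₀ Φ)
    (hE : CLOEquiv ι S cS M₀ c₀) {x : S} (hx : x ∈ TypeSet ι S cS Φ)
    {ψ : (CLOLang ι).Formula Unit} (hψ : ConvexFml ι M₀ c₀ ψ) (hψx : x ∈ FmlSet ι S cS ψ) :
    ψ ∈ Φ :=
  hΦ.2.2 ψ hψ ⟨S, _, cS, hE, x, forall_mem_insert.2 ⟨hψx, hx⟩⟩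

lemma IsConvexType.eq_of_mem_typeSet (hΦ : IsConvexType ι M₀ c₀ Φ) (hΨ : IsConvexType ι M₀ c₀ Ψ)
    (hE : CLOEquiv ι S cS M₀ c₀) {x : S} (hx : x ∈ TypeSet ι S cS Φ)
    (hx' : x ∈ TypeSet ι S cS Ψ) : Φ = Ψ :=
  Subset.antisymm (fun φ hφ => hΨ.mem_of_mem_typeSet hE hx' (hΦ.1 φ hφ) (hx φ hφ))
    fun ψ hψ => hΦ.mem_of_mem_typeSet hE hx (hΨ.1 ψ hψ) (hx' ψ hψ)

lemma IsConvexType.nonempty_typeSet (hΦ : IsConvexType ι M₀ c₀ Φ) (hE : CLOEquiv ι S cS M₀ c₀)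
    (hS : Aleph0Saturated ι S cS) : (TypeSet ι S cS Φ).Nonempty := by
  obtain ⟨B, iB, cB, hB, b, hb⟩ := hΦ.2.1
  obtain ⟨x, hx⟩ := hS.exists_forall_mem_fmlSetOver (a := Empty.elim)
    (θ := fun φ : Φ => φ.1.relabel Sum.inl) fun s => by
      have hbs : b ∈ FmlSet ι B cB (Formula.iInf fun φ : s => φ.1.1) :=
        sat_iInf.2 fun φ => hb φ.1 φ.1.2
      obtain ⟨y, hy⟩ := (hB.trans hE.symm).nonempty_fmlSet ⟨b, hbs⟩
      exact ⟨y, fun φ hφ => sat_relabel.2 (sat_iInf.1 hy ⟨φ, hφ⟩)⟩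
  exact ⟨x, fun φ hφ => sat_relabel.1 (hx ⟨φ, hφ⟩)⟩

lemma IsConvexType.isolatedCT_of_fmlSet_subset (hΦ : IsConvexType ι M₀ c₀ Φ)
    (hE : CLOEquiv ι S cS M₀ c₀) (hS : Aleph0Saturated ι S cS) {φ : (CLOLang ι).Formula Unit}
    (hφ : (FmlSet ι S cS φ).Nonempty) (hφΦ : FmlSet ι S cS φ ⊆ TypeSet ι S cS Φ) :
    IsolatedCT ι M₀ c₀ Φ := by
  have hC := hΦ.ordConnected_typeSet hE
  have hhull : FmlSet ι S cS (hullFml φ) ⊆ TypeSet ι S cS Φ := by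
    intro x hx
    obtain ⟨y, hy, z, hz, hxyz⟩ := mem_fmlSet_hullFml.1 hx
    exact hC.out (hφΦ hy) (hφΦ hz) hxyz
  obtain ⟨b, hb⟩ := hφ
  have hbhull : b ∈ FmlSet ι S cS (hullFml φ) :=
    mem_fmlSet_hullFml.2 ⟨b, hb, b, hb, left_mem_Icc.2 le_rfl⟩
  refine ⟨hullFml φ, hΦ.mem_of_mem_typeSet hE (hφΦ hb) (convexFml_hullFml φ) hbhull,
    convexFml_hullFml φ, fun Ψ hΨ hφΨ => ?_⟩
  obtain ⟨x, hx⟩ := hΨ.nonempty_typeSet hE hS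
  exact hΨ.eq_of_mem_typeSet hΦ hE hx (hhull (hx _ hφΨ))

theorem IsConvexType.isolatedCT_of_fmlSetOver_subset (hΦ : IsConvexType ι M₀ c₀ Φ)
    (hE : CLOEquiv ι S cS M₀ c₀) (hS : Aleph0Saturated ι S cS) [Finite β] {a : β → S}
    (ha : ∀ i, a i ∉ TypeSet ι S cS Φ) {θ : (CLOLang ι).Formula (Unit ⊕ β)}
    (hθ : (FmlSetOver cS a θ).Nonempty) (hθΦ : FmlSetOver cS a θ ⊆ TypeSet ι S cS Φ) :
    IsolatedCT ι M₀ c₀ Φ := by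
  obtain ⟨b, hb⟩ := hθ
  obtain ⟨φ, hφ, hφθ⟩ := hS.exists_mem_tupleType_fmlSet_subset (b := b) (a := a) (θ := θ)
    fun b' hb' => (hS.tupleType_elim_eq_of_notMem_typeSet
      (hΦ.ordConnected_typeSet hE) (hθΦ hb) hb' ha).subset hb
  exact hΦ.isolatedCT_of_fmlSet_subset hE hS ⟨b, hφ⟩ (hφθ.trans hθΦ)

end ConvexTypes

section Omitting

open Filter Topology TopologicalSpace

variable {ι S β : Type} [LinearOrder S] {cS : ι → Set S} {a : β → S}
  {θ : (CLOLang ι).Formula (Unit ⊕ β)} {Φ : Set ((CLOLang ι).Formula Unit)}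

/-- The topology generated by the sets definable over `a`, to which Baire's theorem is applied in
order to omit types. Its Kolmogorov quotient embeds into the Stone space of one-variable types over
`a`, but working on `S` itself avoids that space. -/
abbrev definableTopology (cS : ι → Set S) (a : β → S) : TopologicalSpace S :=
  generateFrom (range (FmlSetOver cS a))

lemma fmlSetOver_not : FmlSetOver cS a θ.not = (FmlSetOver cS a θ)ᶜ :=
  Set.ext fun _ => sat_not

lemma isOpen_fmlSetOver : IsOpen[definableTopology cS a] (FmlSetOver cS a θ) :=
  isOpen_generateFrom_of_mem (mem_range_self θ)

lemma isClosed_fmlSetOver : IsClosed[definableTopology cS a] (FmlSetOver cS a θ) := by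
  let _ := definableTopology cS a
  exact ⟨(fmlSetOver_not (cS := cS)).subst isOpen_fmlSetOver⟩

lemma isTopologicalBasis_range_fmlSetOver :
    @IsTopologicalBasis S (definableTopology cS a) (range (FmlSetOver cS a)) := by
  let _ := definableTopology cS a
  refine isTopologicalBasis_of_subbasis_of_finiteInter rfl
    ⟨⟨⊤, eq_univ_of_forall fun _ => id⟩, ?_⟩
  rintro _ ⟨θ, rfl⟩ _ ⟨χ, rfl⟩
  exact ⟨θ ⊓ χ, Set.ext fun _ => sat_inf⟩

lemma regularSpace_definableTopology : @RegularSpace S (definableTopology cS a) := by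
  let _ := definableTopology cS a
  refine (regularSpace_generateFrom rfl).2 ?_
  rintro _ ⟨θ, rfl⟩ x hx
  rw [isClosed_fmlSetOver.isOpen_compl.nhdsSet_eq]
  exact disjoint_principal_left.2 (by simpa using isOpen_fmlSetOver.mem_nhds hx)

lemma Aleph0Saturated.compactSpace_definableTopology (hS : Aleph0Saturated ι S cS) [Finite β] :
    @CompactSpace S (definableTopology cS a) := by
  let _ := definableTopology cS a
  refine ⟨isCompact_iff_ultrafilter_le_nhds.2 fun U _ => ?_⟩
  obtain ⟨x, hx⟩ := hS.exists_forall_mem_fmlSetOver (a := a)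
    (θ := fun θ : {θ // FmlSetOver cS a θ ∈ U} => θ.1) fun s => by
      have hs : ⋂ θ ∈ s, FmlSetOver cS a θ.1 ∈ U := (biInter_finset_mem s).2 fun θ _ => θ.2
      exact (U.nonempty_of_mem hs).imp fun x hx => mem_iInter₂.1 hx
  refine ⟨x, mem_univ x, tendsto_nhds_generateFrom_iff.2 ?_⟩
  rintro _ ⟨θ, rfl⟩ hxθ
  by_contra hθ
  have hnot : FmlSetOver cS a θ.not ∈ U := by
    rwa [fmlSetOver_not, Ultrafilter.compl_mem_iff_notMem]
  exact sat_not.1 (hx ⟨_, hnot⟩) hxθ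

lemma isClosed_typeSet : IsClosed[definableTopology cS a] (TypeSet ι S cS Φ) := by
  let _ := definableTopology cS a
  have h : TypeSet ι S cS Φ = ⋂ φ ∈ Φ, FmlSetOver cS a (φ.relabel Sum.inl) := by
    ext x
    rw [mem_iInter₂]
    exact forall₂_congr fun φ _ => (sat_relabel (g := Sum.inl) (v := Sum.elim (fun _ => x) a)).symm
  rw [h]
  exact isClosed_biInter fun φ _ => isClosed_fmlSetOver

variable {M₀ : Type} [LinearOrder M₀] {c₀ : ι → Set M₀}

lemma IsConvexType.dense_compl_typeSet (hΦ : IsConvexType ι M₀ c₀ Φ)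
    (hni : ¬ IsolatedCT ι M₀ c₀ Φ) (hE : CLOEquiv ι S cS M₀ c₀) (hS : Aleph0Saturated ι S cS)
    [Finite β] (ha : ∀ i, a i ∉ TypeSet ι S cS Φ) :
    @Dense S (definableTopology cS a) (TypeSet ι S cS Φ)ᶜ := by
  let _ := definableTopology cS a
  refine isTopologicalBasis_range_fmlSetOver.dense_iff.2 ?_
  rintro _ ⟨θ, rfl⟩ hθ
  exact not_subset.1 fun h => hni (hΦ.isolatedCT_of_fmlSetOver_subset hE hS ha hθ h)

theorem exists_mem_fmlSetOver_forall_notMem_typeSet (hE : CLOEquiv ι S cS M₀ c₀)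
    (hS : Aleph0Saturated ι S cS) {P : Set (Set ((CLOLang ι).Formula Unit))} (hP : P.Countable)
    (hPni : ∀ Φ ∈ P, IsConvexType ι M₀ c₀ Φ ∧ ¬ IsolatedCT ι M₀ c₀ Φ) [Finite β]
    (ha : ∀ i, ∀ Φ ∈ P, a i ∉ TypeSet ι S cS Φ) (hθ : (FmlSetOver cS a θ).Nonempty) :
    ∃ x ∈ FmlSetOver cS a θ, ∀ Φ ∈ P, x ∉ TypeSet ι S cS Φ := by
  let _ := definableTopology cS a
  have := regularSpace_definableTopology (cS := cS) (a := a)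
  have := hS.compactSpace_definableTopology (a := a)
  have hdense : Dense (⋂ Φ ∈ P, (TypeSet ι S cS Φ)ᶜ) :=
    dense_biInter_of_isOpen (fun Φ _ => isClosed_typeSet.isOpen_compl) hP fun Φ hΦ =>
      (hPni Φ hΦ).1.dense_compl_typeSet (hPni Φ hΦ).2 hE hS fun i => ha i Φ hΦ
  obtain ⟨x, hxθ, hx⟩ := hdense.inter_open_nonempty _ isOpen_fmlSetOver hθ
  exact ⟨x, hxθ, mem_iInter₂.1 hx⟩

end Omitting

section ElementaryMaps

variable {ι M N K : Type} [LinearOrder M] {cM : ι → Set M} [LinearOrder N] {cN : ι → Set N}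
  [LinearOrder K] {cK : ι → Set K} {f : M → N} {g : N → K}

lemma IsElemMap.comp (hg : IsElemMap ι cN cK g) (hf : IsElemMap ι cM cN f) :
    IsElemMap ι cM cK (g ∘ f) :=
  fun k φ v => (hf k φ v).trans (hg k φ (f ∘ v))

lemma IsElemMap.cloEquiv (hf : IsElemMap ι cM cN f) : CLOEquiv ι M cM N cN := by
  let _ := CLOStr ι M cM
  let _ := CLOStr ι N cN
  refine elementarilyEquivalent_iff.2 fun φ => ?_
  have h := hf 0 (φ.relabel Empty.elim) Fin.elim0
  rwa [sat_relabel, sat_relabel, Subsingleton.elim (_ ∘ _) default,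
    Subsingleton.elim (_ ∘ _) default] at h

lemma IsElemMap.mem_typeSet_iff (hf : IsElemMap ι cM cN f) {Φ : Set ((CLOLang ι).Formula Unit)}
    {x : M} : f x ∈ TypeSet ι N cN Φ ↔ x ∈ TypeSet ι M cM Φ := by
  refine forall₂_congr fun φ _ => ?_
  have h := hf 1 (φ.relabel fun _ => 0) fun _ => x
  rw [sat_relabel, sat_relabel] at h
  exact h.symm

lemma isElemSubset_elementarySubstructure
    (A : @Language.ElementarySubstructure (CLOLang ι) M (CLOStr ι M cM)) :
    IsElemSubset ι M cM A := by
  let _ := CLOStr ι M cM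
  have h : CLOStr ι (A : Set M) (subColor cM A) = A.inducedStructure := by
    ext n R x
    · exact isEmptyElim R
    · cases R <;> rfl
  intro k φ v
  unfold Sat
  rw [h]
  exact (A.subtype.map_formula φ v).symm

lemma exists_countable_isElemSubset [Countable ι] {X : Set M} (hX : X.Countable) :
    ∃ A : Set M, X ⊆ A ∧ A.Countable ∧ IsElemSubset ι M cM A := by
  let _ := CLOStr ι M cM
  obtain ⟨A, hXA, hA⟩ := exists_countable_elementarySubstructure (L := CLOLang ι) hX
  exact ⟨A, hXA, hA, isElemSubset_elementarySubstructure A⟩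

variable {M₀ : Type} [LinearOrder M₀] {c₀ : ι → Set M₀}

lemma Aleph0Saturated.isElemSubset_forall_notMem_typeSet (hM : Aleph0Saturated ι M cM)
    (hE : CLOEquiv ι M cM M₀ c₀) {P : Set (Set ((CLOLang ι).Formula Unit))} (hP : P.Countable)
    (hPni : ∀ Φ ∈ P, IsConvexType ι M₀ c₀ Φ ∧ ¬ IsolatedCT ι M₀ c₀ Φ) :
    IsElemSubset ι M cM {x | ∀ Φ ∈ P, x ∉ TypeSet ι M cM Φ} := by
  let _ := CLOStr ι M cM
  obtain ⟨A, hA⟩ := exists_elementarySubstructure_coe_eq (L := CLOLang ι)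
    (A := {x | ∀ Φ ∈ P, x ∉ TypeSet ι M cM Φ}) fun n θ a ha x hx => by
      obtain ⟨y, hy, hyP⟩ :=
        exists_mem_fmlSetOver_forall_notMem_typeSet hE hM hP hPni ha ⟨x, hx⟩
      exact ⟨y, hyP, hy⟩
  exact hA ▸ isElemSubset_elementarySubstructure A

theorem Aleph0Saturated.exists_countable_isElemMap_forall_notMem_typeSet [Countable ι]
    (hM : Aleph0Saturated ι M cM) (hE : CLOEquiv ι M cM M₀ c₀)
    {P : Set (Set ((CLOLang ι).Formula Unit))} (hP : P.Countable)
    (hPni : ∀ Φ ∈ P, IsConvexType ι M₀ c₀ Φ ∧ ¬ IsolatedCT ι M₀ c₀ Φ)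
    {X : Set M} (hX : X.Countable) (hXP : ∀ x ∈ X, ∀ Φ ∈ P, x ∉ TypeSet ι M cM Φ) :
    ∃ (N : Type) (_ : LinearOrder N) (cN : ι → Set N) (f : N → M), Countable N ∧
      IsElemMap ι cN cM f ∧ X ⊆ range f ∧ ∀ x, ∀ Φ ∈ P, f x ∉ TypeSet ι M cM Φ := by
  have hA := hM.isElemSubset_forall_notMem_typeSet hE hP hPni
  obtain ⟨B, hXB, hBc, hB⟩ := exists_countable_isElemSubset
    (cM := subColor cM {x | ∀ Φ ∈ P, x ∉ TypeSet ι M cM Φ})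
    (hX.preimage Subtype.val_injective)
  exact ⟨B, inferInstance, subColor _ B, Subtype.val ∘ Subtype.val, hBc.to_subtype, hA.comp hB,
    fun x hx => ⟨⟨⟨x, hXP x hx⟩, hXB hx⟩, rfl⟩, fun x => x.1.2⟩

end ElementaryMaps

section Isomorphism

variable {ι N K : Type} [LinearOrder N] {cN : ι → Set N} [LinearOrder K] {cK : ι → Set K}
  {f : N → ℕ} {g : K → ℕ}

lemma CLOIso.symm (h : CLOIso ι N cN K cK) : CLOIso ι K cK N cN := by
  let _ := CLOStr ι N cN
  let _ := CLOStr ι K cK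
  exact Nonempty.map Language.Equiv.symm h

lemma CLOIso.nonempty_typeSet (h : CLOIso ι N cN K cK) {Φ : Set ((CLOLang ι).Formula Unit)}
    (hN : (TypeSet ι N cN Φ).Nonempty) : (TypeSet ι K cK Φ).Nonempty := by
  let _ := CLOStr ι N cN
  let _ := CLOStr ι K cK
  obtain ⟨e⟩ := h
  obtain ⟨x, hx⟩ := hN
  exact ⟨e x, fun φ hφ => (StrongHomClass.realize_formula e φ).2 (hx φ hφ)⟩

lemma CLOIso.nonempty_typeSet_iff (h : CLOIso ι N cN K cK)
    {Φ : Set ((CLOLang ι).Formula Unit)} :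
    (TypeSet ι N cN Φ).Nonempty ↔ (TypeSet ι K cK Φ).Nonempty :=
  ⟨h.nonempty_typeSet, h.symm.nonempty_typeSet⟩

lemma cloIso_of_orderIso (e : N ≃o K) (he : ∀ k x, e x ∈ cK k ↔ x ∈ cN k) :
    CLOIso ι N cN K cK := by
  let _ := CLOStr ι N cN
  let _ := CLOStr ι K cK
  refine ⟨⟨e.toEquiv, fun F => isEmptyElim F, fun R v => ?_⟩⟩
  cases R with
  | lt => exact e.lt_iff_lt
  | color k => exact he k _

/-- The diagram of a CLO whose points are labelled by natural numbers. -/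
def cloDiagram (cN : ι → Set N) (f : N → ℕ) : Set (ℕ × ℕ ⊕ ι × ℕ) :=
  {d | (∃ x y, x ≤ y ∧ d = Sum.inl (f x, f y)) ∨ ∃ k, ∃ x ∈ cN k, d = Sum.inr (k, f x)}

lemma inl_mem_cloDiagram_self {n : ℕ} : Sum.inl (n, n) ∈ cloDiagram cN f ↔ n ∈ range f := by
  simp only [cloDiagram, mem_ofPred_eq, Sum.inl.injEq, Prod.mk.injEq, reduceCtorEq, and_false,
    exists_false, or_false]
  exact ⟨fun ⟨x, _, _, hx, _⟩ => ⟨x, hx.symm⟩, fun ⟨x, hx⟩ => ⟨x, x, le_rfl, hx.symm, hx.symm⟩⟩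

lemma inl_mem_cloDiagram (hf : Function.Injective f) {x y : N} :
    Sum.inl (f x, f y) ∈ cloDiagram cN f ↔ x ≤ y := by
  simp [cloDiagram, hf.eq_iff]

lemma inr_mem_cloDiagram (hf : Function.Injective f) {k : ι} {x : N} :
    Sum.inr (k, f x) ∈ cloDiagram cN f ↔ x ∈ cN k := by
  simp [cloDiagram, hf.eq_iff]

lemma cloIso_of_cloDiagram_eq (hf : Function.Injective f) (hg : Function.Injective g)
    (h : cloDiagram cN f = cloDiagram cK g) : CLOIso ι N cN K cK := by
  have hrange : range f = range g := by
    ext n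
    rw [← inl_mem_cloDiagram_self (cN := cN), h, inl_mem_cloDiagram_self]
  let e : N ≃ K := (Equiv.ofInjective f hf).trans
    ((Equiv.setCongr hrange).trans (Equiv.ofInjective g hg).symm)
  have he (x : N) : g (e x) = f x := Equiv.apply_ofInjective_symm hg _
  refine cloIso_of_orderIso ⟨e, fun {x y} => ?_⟩ fun k x => ?_
  · rw [← inl_mem_cloDiagram hg (cN := cK), he, he, ← h, inl_mem_cloDiagram hf]
  · rw [← inr_mem_cloDiagram hg]
    change Sum.inr (k, g (e x)) ∈ _ ↔ _
    rw [he, ← h, inr_mem_cloDiagram hf]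

theorem exists_enumeration_countable_clo (ι : Type) [Countable ι] :
    ∃ (U : Set ℕ → Type) (iU : ∀ s, LinearOrder (U s)) (cU : ∀ s, ι → Set (U s)),
      ∀ (B : Type) [LinearOrder B], ∀ cB : ι → Set B, Countable B →
        ∃ s, letI := iU s; CLOIso ι B cB (U s) (cU s) := by
  obtain ⟨j, hj⟩ := Countable.exists_injective_nat (ℕ × ℕ ⊕ ι × ℕ)
  have decode (s : Set ℕ) : ∃ (U : Type) (iU : LinearOrder U) (cU : ι → Set U),
      ∀ (B : Type) (iB : LinearOrder B) (cB : ι → Set B) (f : B → ℕ), Function.Injective f →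
        j '' cloDiagram cB f = s → CLOIso ι B cB U cU := by
    by_cases hs : ∃ (U : Type) (iU : LinearOrder U) (cU : ι → Set U) (g : U → ℕ),
        Function.Injective g ∧ j '' cloDiagram cU g = s
    · obtain ⟨U, iU, cU, g, hg, rfl⟩ := hs
      exact ⟨U, iU, cU, fun B _ cB f hf hfg =>
        cloIso_of_cloDiagram_eq hf hg (hj.image_injective hfg)⟩
    · exact ⟨Empty, inferInstance, fun _ => ∅, fun B iB cB f hf hfs =>
        (hs ⟨B, iB, cB, f, hf, hfs⟩).elim⟩
  choose U iU cU hU using decode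
  refine ⟨U, iU, cU, fun B iB cB _ => ?_⟩
  obtain ⟨f, hf⟩ := Countable.exists_injective_nat B
  exact ⟨_, hU _ B iB cB f hf rfl⟩

end Isomorphism

section RealizedTypes

variable {ι M₀ S K : Type} [LinearOrder M₀] {c₀ : ι → Set M₀} [LinearOrder S] {cS : ι → Set S}

lemma TypeConsistent.nonempty {Φ : Set ((CLOLang ι).Formula Unit)}
    (hΦ : TypeConsistent ι M₀ c₀ Φ) : Nonempty M₀ := by
  obtain ⟨B, iB, cB, hB, b, -⟩ := hΦ
  have hb : b ∈ FmlSet ι B cB ⊤ := fun h => h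
  exact (hB.nonempty_fmlSet ⟨b, hb⟩).to_type

theorem Aleph0Saturated.exists_countable_model_nonempty_typeSet_iff [Countable ι] [Countable K]
    (hS : Aleph0Saturated ι S cS) (hE : CLOEquiv ι S cS M₀ c₀)
    {Φ : K → Set ((CLOLang ι).Formula Unit)} (hinj : Function.Injective Φ)
    (hΦ : ∀ k, IsConvexType ι M₀ c₀ (Φ k) ∧ ¬ IsolatedCT ι M₀ c₀ (Φ k)) (s : Set K) :
    ∃ (N : Type) (_ : LinearOrder N) (cN : ι → Set N), Countable N ∧ CLOEquiv ι N cN M₀ c₀ ∧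
      ∀ k, (TypeSet ι N cN (Φ k)).Nonempty ↔ k ∈ s := by
  choose b hb using fun k => (hΦ k).1.nonempty_typeSet hE hS
  have hbs : ∀ x ∈ b '' s, ∀ Ψ ∈ Φ '' sᶜ, x ∉ TypeSet ι S cS Ψ := by
    rintro _ ⟨k, hk, rfl⟩ _ ⟨l, hl, rfl⟩ hmem
    obtain rfl : k = l := hinj ((hΦ k).1.eq_of_mem_typeSet (hΦ l).1 hE (hb k) hmem)
    exact hl hk
  obtain ⟨N, iN, cN, f, hN, hf, hbf, hfs⟩ :=
    hS.exists_countable_isElemMap_forall_notMem_typeSet hE (sᶜ.to_countable.image Φ)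
      (forall_mem_image.2 fun k _ => hΦ k) (s.to_countable.image b) hbs
  refine ⟨N, iN, cN, hN, hf.cloEquiv.trans hE, fun k => ⟨?_, fun hk => ?_⟩⟩
  · rintro ⟨x, hx⟩
    by_contra hk
    exact hfs x _ (mem_image_of_mem Φ hk) (hf.mem_typeSet_iff.2 hx)
  · obtain ⟨x, hx⟩ := hbf (mem_image_of_mem b hk)
    exact ⟨x, hf.mem_typeSet_iff.1 (hx ▸ hb k)⟩

end RealizedTypes

theorem stmt17_general {ι : Type} [Countable ι] {M₀ : Type} [LinearOrder M₀] (c₀ : ι → Set M₀)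
    (hni : {Φ | IsConvexType ι M₀ c₀ Φ ∧ ¬ IsolatedCT ι M₀ c₀ Φ}.Infinite) :
    (∃ (N : Set ℕ → Type) (iN : ∀ s, LinearOrder (N s)) (cN : ∀ s, ι → Set (N s)),
      (∀ s, Countable (N s)) ∧
      (∀ s, letI := iN s; CLOEquiv ι (N s) (cN s) M₀ c₀) ∧
      ∀ s t, s ≠ t → letI := iN s; letI := iN t; ¬ CLOIso ι (N s) (cN s) (N t) (cN t)) ∧
    ∃ (U : Set ℕ → Type) (iU : ∀ s, LinearOrder (U s)) (cU : ∀ s, ι → Set (U s)),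
      ∀ (B : Type) [LinearOrder B], ∀ cB : ι → Set B, Countable B →
        CLOEquiv ι B cB M₀ c₀ → ∃ s, letI := iU s; CLOIso ι B cB (U s) (cU s) := by
  constructor
  · let Φ := hni.natEmbedding
    have : Nonempty M₀ := (Φ 0).2.1.2.1.nonempty
    choose N iN cN hN hNE hNs using
      aleph0Saturated_germ_hyperfilter.exists_countable_model_nonempty_typeSet_iff
        (cloEquiv_germ (c := c₀)) (Subtype.val_injective.comp Φ.injective) fun n => (Φ n).2
    refine ⟨N, iN, cN, hN, hNE, fun s t hst hiso => hst (Set.ext fun n => ?_)⟩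
    rw [← hNs s n, ← hNs t n]
    exact hiso.nonempty_typeSet_iff
  · obtain ⟨U, iU, cU, hU⟩ := exists_enumeration_countable_clo ι
    exact ⟨U, iU, cU, fun B _ cB hB _ => hU B cB hB⟩

theorem stmt17 {ι : Type} [Countable ι] {M₀ : Type} [LinearOrder M₀] (c₀ : ι → Set M₀)
    (hLS : LocallySimple ι M₀ c₀)
    (hcount : {Φ | IsConvexType ι M₀ c₀ Φ}.Countable)
    (hinf : {Φ | IsConvexType ι M₀ c₀ Φ}.Infinite)
    (hni : {Φ | IsConvexType ι M₀ c₀ Φ ∧ ¬ IsolatedCT ι M₀ c₀ Φ}.Infinite) :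
    (∃ (N : Set ℕ → Type) (iN : ∀ s, LinearOrder (N s)) (cN : ∀ s, ι → Set (N s)),
      (∀ s, Countable (N s)) ∧
      (∀ s, letI := iN s; CLOEquiv ι (N s) (cN s) M₀ c₀) ∧
      ∀ s t, s ≠ t → letI := iN s; letI := iN t; ¬ CLOIso ι (N s) (cN s) (N t) (cN t)) ∧
    ∃ (U : Set ℕ → Type) (iU : ∀ s, LinearOrder (U s)) (cU : ∀ s, ι → Set (U s)),
      ∀ (B : Type) [LinearOrder B], ∀ cB : ι → Set B, Countable B →
        CLOEquiv ι B cB M₀ c₀ → ∃ s, letI := iU s; CLOIso ι B cB (U s) (cU s) :=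
  stmt17_general c₀ hni
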